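/- Let (V, w, d) be a finite weighted metric space and define the k-means cost cost(S) = ∑_{x∈V} w(x)·(min_{y∈S} d(x,y))² for nonempty S ⊆ V. Then for all subsets A ⊆ B ⊆ V with A nonempty, ∑_{y ∈ B∖A} ( cost(B − y) − cost(B) ) ≤ cost(A) − cost(B), where B − y denotes B with the point y removed. -/

import Mathlib

/-!
The inequality holds point by point. Fix `x` and let `z` be a point of `B` nearest to `x`.
Removing any `y ≠ z` from `B` leaves `d(x, B)` unchanged, so at most the term `y = z` of the sum
is nonzero. If `z ∉ A`, that term is at most `d(x, A)² - d(x, B)²` because `A ⊆ B - z`; if `z ∈ A`,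
the sum vanishes while the right-hand side is nonnegative. Both facts are monotonicity of the
distance in the set (`distToSet_anti`). Summing over `x` with the weights `w x` gives the claim.
-/

open Finset

/-- Distance from a point to a (nonempty) finite set: `min_{y ∈ S} d(x,y)`. -/
noncomputable def distToSet {V : Type*} [MetricSpace V] (x : V) (S : Finset V) : ℝ :=
  sInf ((fun y => dist x y) '' ↑S)

/-- `k`-means cost of a center set `S` with respect to the point set `U`:
`∑_{x ∈ U} w(x) · d(x, S)²`. -/
noncomputable def kCost2 {V : Type*} [MetricSpace V] (w : V → NNReal) (S U : Finset V) : ℝ :=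
  ∑ x ∈ U, (w x : ℝ) * (distToSet x S) ^ 2

/-- `OPT_k(U, X)` for `k`-means: minimum over `S ⊆ X` with `|S| = k` of `kCost2 w S U`. -/
noncomputable def kOPT2 {V : Type*} [MetricSpace V] (w : V → NNReal) (k : ℕ) (U X : Finset V) : ℝ :=
  sInf {c : ℝ | ∃ S : Finset V, S ⊆ X ∧ S.card = k ∧ c = kCost2 w S U}

lemma distToSet_nonneg {V : Type*} [MetricSpace V] (x : V) (S : Finset V) :
    0 ≤ distToSet x S := by
  apply Real.sInf_nonneg
  rintro _ ⟨y, _, rfl⟩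
  exact dist_nonneg

/-- The empty set is excluded because its distance takes the junk value `0`. -/
lemma distToSet_anti {V : Type*} [MetricSpace V] (x : V) {S T : Finset V} (hS : S.Nonempty)
    (hST : S ⊆ T) : distToSet x T ≤ distToSet x S :=
  csInf_le_csInf (T.finite_toSet.image _).bddBelow (hS.to_set.image _)
    (Set.image_mono (Finset.coe_subset.2 hST))

lemma exists_mem_distToSet_eq {V : Type*} [MetricSpace V] (x : V) {S : Finset V}
    (hS : S.Nonempty) : ∃ z ∈ S, distToSet x S = dist x z := by
  obtain ⟨z, hz, h⟩ := (hS.to_set.image (fun y => dist x y)).csInf_mem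
    (S.finite_toSet.image _)
  exact ⟨z, hz, h.symm⟩

lemma distToSet_le_dist {V : Type*} [MetricSpace V] (x : V) {S : Finset V} {z : V}
    (hz : z ∈ S) : distToSet x S ≤ dist x z :=
  csInf_le (S.finite_toSet.image _).bddBelow ⟨z, hz, rfl⟩

/-- The unweighted inequality for a single point `x`. -/
lemma sum_distToSet_erase_le {V : Type*} [MetricSpace V] [DecidableEq V] (x : V)
    {A B : Finset V} (hA : A.Nonempty) (hAB : A ⊆ B) :
    ∑ y ∈ B \ A, (distToSet x (B.erase y) ^ 2 - distToSet x B ^ 2) ≤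
      distToSet x A ^ 2 - distToSet x B ^ 2 := by
  obtain ⟨z, hzB, hz⟩ := exists_mem_distToSet_eq x (hA.mono hAB)
  have hzero : ∀ y ∈ B \ A, y ≠ z → distToSet x (B.erase y) ^ 2 - distToSet x B ^ 2 = 0 := by
    intro y _ hyz
    have hmem : z ∈ B.erase y := mem_erase.2 ⟨hyz.symm, hzB⟩
    have h : distToSet x (B.erase y) = distToSet x B :=
      le_antisymm (hz ▸ distToSet_le_dist x hmem) (distToSet_anti x ⟨z, hmem⟩ (erase_subset y B))
    rw [h, sub_self]
  by_cases hzA : z ∈ A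
  · rw [sum_eq_zero fun y hy => hzero y hy fun h => (mem_sdiff.1 hy).2 (h ▸ hzA)]
    exact sub_nonneg.2 (pow_le_pow_left₀ (distToSet_nonneg x B) (distToSet_anti x hA hAB) 2)
  · rw [sum_eq_single_of_mem z (mem_sdiff.2 ⟨hzB, hzA⟩) hzero]
    have hsub : A ⊆ B.erase z := subset_erase.2 ⟨hAB, hzA⟩
    exact sub_le_sub_right
      (pow_le_pow_left₀ (distToSet_nonneg x _) (distToSet_anti x hA hsub) 2) _

/-- `∑_{y ∈ B \ A} (cost(B − y) − cost(B)) ≤ cost(A) − cost(B)` for `A ⊆ B`,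
for the `k`-means objective. -/
theorem sum_removal_increase_le_kmeans {V : Type*} [Fintype V] [MetricSpace V] [DecidableEq V]
    (w : V → NNReal) (A B : Finset V) (hA : A.Nonempty) (hAB : A ⊆ B) :
    ∑ y ∈ B \ A, (kCost2 w (B.erase y) Finset.univ - kCost2 w B Finset.univ) ≤
      kCost2 w A Finset.univ - kCost2 w B Finset.univ := by
  simp only [kCost2, ← sum_sub_distrib, ← mul_sub]
  rw [sum_comm]
  refine sum_le_sum fun x _ => ?_
  rw [← mul_sum]
  exact mul_le_mul_of_nonneg_left (sum_distToSet_erase_le x hA hAB) (w x).coe_nonneg
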